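/- Let s be a proper scoring rule on 𝒫. Then the following are equivalent: (a) for every quasi-strictly proper scoring rule s' : 𝒞 → [-∞,M]^Ω extending s, and every c ∈ 𝒞 \ 𝒫, there exists p ∈ 𝒫 such that s'(p) = s(p) strictly dominates s'(c); (b) either E_p s(p) = -∞ for some p ∈ 𝒫, or both of the following hold: (i) for every sequence (p_n) in 𝒫 converging to a probability function p (i.e., p_n({ω}) → p({ω}) for every ω ∈ Ω) such that s(p_n) is finite for all n while s(p) is not finite, one has lim_n E_{p_n} s(p_n) = E_p s(p); and (ii) the set F = s[𝒫] ∩ ℝ^Ω of finite scores is dense in ∂⁺ Conv F. -/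

import Mathlib

open Filter Topology

variable {Ω : Type*}

/-- A probability function: nonnegative, finitely additive, total mass one. -/
def IsProbability [Fintype Ω] (p : Set Ω → ℝ) : Prop :=
  (∀ A, 0 ≤ p A) ∧ (∀ A B : Set Ω, Disjoint A B → p (A ∪ B) = p A + p B) ∧ p Set.univ = 1

/-- Expected value `E_p f = Σ_{ω, p({ω}) ≠ 0} p({ω}) f(ω)`.  Since `EReal`
multiplication satisfies `0 * a = a * 0 = 0` even for infinite `a`, the zero terms
contribute nothing and we may sum over all of `Ω`. -/
noncomputable def expScore [Fintype Ω] (p : Set Ω → ℝ) (f : Ω → EReal) : EReal :=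
  ∑ ω, (p {ω} : EReal) * f ω

/-- A score is finite when all of its values are finite. -/
def FiniteScore (f : Ω → EReal) : Prop := ∀ ω, f ω ≠ ⊥ ∧ f ω ≠ ⊤

/-- The set of finite scores `F = s[𝒫] ∩ ℝ^Ω`, viewed as a subset of `ℝ^Ω`. -/
def finScores [Fintype Ω] (s : (Set Ω → ℝ) → Ω → EReal) : Set (Ω → ℝ) :=
  {z | ∃ p, IsProbability p ∧ s p = fun ω => (z ω : EReal)}

/-- The positive-facing boundary `∂⁺ G`: boundary points of `G` at which `G` has a
normal vector with all components positive. -/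
def posFacing [Fintype Ω] (G : Set (Ω → ℝ)) : Set (Ω → ℝ) :=
  {z | z ∈ frontier G ∧ ∃ v : Ω → ℝ, (∀ ω, 0 < v ω) ∧
    ∀ w ∈ G, ∑ ω, v ω * w ω ≤ ∑ ω, v ω * z ω}

/-- `A` is dense in `B`: every open set meeting `B` meets `A`. -/
def DenseIn {X : Type*} [TopologicalSpace X] (A B : Set X) : Prop :=
  ∀ U : Set X, IsOpen U → (U ∩ B).Nonempty → (U ∩ A).Nonempty

section Aux
variable [Fintype Ω]

lemma prob_sum {p : Set Ω → ℝ} (hp : IsProbability p) : ∑ ω, p {ω} = 1 := by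
  classical
  have h0 : p ∅ = 0 := by
    have := hp.2.1 ∅ ∅ (by simp)
    simp at this
    exact this
  have key : ∀ t : Finset Ω, p (t : Set Ω) = ∑ ω ∈ t, p {ω} := by
    intro t
    induction t using Finset.induction_on with
    | empty => simpa using h0
    | insert a t ha ih =>
      rw [Finset.sum_insert ha, ← ih, Finset.coe_insert, Set.insert_eq]
      exact hp.2.1 _ _ (by simpa using ha)
  have := key Finset.univ
  rw [← this, Finset.coe_univ]
  exact hp.2.2

lemma exists_prob (v : Ω → ℝ) (h0 : ∀ ω, 0 ≤ v ω) (h1 : ∑ ω, v ω = 1) :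
    ∃ p : Set Ω → ℝ, IsProbability p ∧ ∀ ω, p {ω} = v ω := by
  classical
  refine ⟨fun A => ∑ ω, A.indicator v ω, ⟨?_, ?_, ?_⟩, ?_⟩
  · intro A
    exact Finset.sum_nonneg fun ω _ => Set.indicator_nonneg (fun x _ => h0 x) ω
  · intro A B hAB
    simp only
    rw [← Finset.sum_add_distrib]
    refine Finset.sum_congr rfl fun ω _ => ?_
    rw [Set.indicator_union_of_disjoint hAB]
  · simpa using h1
  · intro ω
    simp [Set.indicator_apply]

lemma expScore_coe (p : Set Ω → ℝ) (z : Ω → ℝ) :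
    expScore p (fun ω => (z ω : EReal)) = ((∑ ω, p {ω} * z ω : ℝ) : EReal) := by
  unfold expScore
  induction (Finset.univ : Finset Ω) using Finset.cons_induction with
  | empty => simp
  | cons a t ha ih => simp only [Finset.sum_cons, ih, EReal.coe_add, EReal.coe_mul]

lemma expScore_real (p : Set Ω → ℝ) (f : Ω → EReal) (z : Ω → ℝ)
    (h : ∀ ω, p {ω} ≠ 0 → f ω = z ω) :
    expScore p f = ((∑ ω, p {ω} * z ω : ℝ) : EReal) := by
  rw [← expScore_coe]
  unfold expScore
  refine Finset.sum_congr rfl fun ω _ => ?_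
  by_cases h0 : p {ω} = 0
  · simp [h0]
  · rw [h ω h0]

lemma expScore_bot {p : Set Ω → ℝ} (hp : IsProbability p) (f : Ω → EReal) (ω : Ω)
    (h : p {ω} ≠ 0) (hf : f ω = ⊥) : expScore p f = ⊥ := by
  classical
  unfold expScore
  rw [← Finset.add_sum_erase _ _ (Finset.mem_univ ω), hf,
    EReal.coe_mul_bot_of_pos (lt_of_le_of_ne (hp.1 _) (Ne.symm h)), EReal.bot_add]

lemma coe_toReal_of_le {M : ℝ} {x : EReal} (h : x ≤ (M : EReal)) (hb : x ≠ ⊥) :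
    x = ((x.toReal : ℝ) : EReal) :=
  (EReal.coe_toReal (ne_top_of_le_ne_top (EReal.coe_ne_top M) h) hb).symm

/-- A finite expectation is the expectation of the real parts. -/
lemma expScore_toReal {p : Set Ω → ℝ} (hp : IsProbability p) {M : ℝ} (f : Ω → EReal)
    (hf : ∀ ω, f ω ≤ (M : EReal)) (h : expScore p f ≠ ⊥) :
    expScore p f = ((∑ ω, p {ω} * (f ω).toReal : ℝ) : EReal) := by
  refine expScore_real p f _ fun ω h0 => coe_toReal_of_le (hf ω) fun hb => h ?_
  exact expScore_bot hp f ω h0 hb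

/-- Lowering a score by a positive constant strictly lowers its expectation. -/
lemma expScore_sub_lt {p : Set Ω → ℝ} (hp : IsProbability p) {M : ℝ} (f : Ω → EReal)
    (hf : ∀ ω, f ω ≤ (M : EReal)) {x : EReal} (hx : x ≠ ⊥) (hle : expScore p f ≤ x)
    {δ : ℝ} (hδ : 0 < δ) : expScore p (fun ω => f ω - (δ : EReal)) < x := by
  by_cases hb : expScore p f = ⊥
  · have : ∃ ω, p {ω} ≠ 0 ∧ f ω = ⊥ := by
      by_contra! hcon
      rw [expScore_real p f (fun ω => (f ω).toReal)
        (fun ω h0 => coe_toReal_of_le (hf ω) (hcon ω h0))] at hb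
      exact EReal.coe_ne_bot _ hb
    obtain ⟨ω, h0, hω⟩ := this
    rw [expScore_bot hp _ ω h0 (by simp [hω])]
    exact bot_lt_iff_ne_bot.2 hx
  · refine lt_of_lt_of_le ?_ hle
    rw [expScore_toReal hp f hf hb]
    rw [expScore_real p _ (fun ω => (f ω).toReal - δ)]
    · rw [EReal.coe_lt_coe_iff]
      simp only [mul_sub, Finset.sum_sub_distrib, ← Finset.sum_mul, prob_sum hp]
      linarith
    · intro ω h0
      rw [EReal.coe_sub, ← coe_toReal_of_le (hf ω)]
      exact fun h => hb (expScore_bot hp f ω h0 h)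

lemma sum_le_of_mem_closure {F : Set (Ω → ℝ)} {v : Ω → ℝ} {r : ℝ}
    (h : ∀ w ∈ F, ∑ ω, v ω * w ω ≤ r) {z : Ω → ℝ} (hz : z ∈ closure (convexHull ℝ F)) :
    ∑ ω, v ω * z ω ≤ r := by
  have hc : Convex ℝ {w : Ω → ℝ | ∑ ω, v ω * w ω ≤ r} := by
    intro a ha b hb s t hs ht hst
    simp only [Set.mem_ofPred_eq, Pi.add_apply, Pi.smul_apply, smul_eq_mul] at *
    have : ∑ ω, v ω * (s * a ω + t * b ω) = s * ∑ ω, v ω * a ω + t * ∑ ω, v ω * b ω := by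
      rw [Finset.mul_sum, Finset.mul_sum, ← Finset.sum_add_distrib]
      exact Finset.sum_congr rfl fun ω _ => by ring
    rw [this]
    calc s * ∑ ω, v ω * a ω + t * ∑ ω, v ω * b ω ≤ s * r + t * r := by gcongr
      _ = r := by rw [← add_mul, hst, one_mul]
  have hcl : IsClosed {w : Ω → ℝ | ∑ ω, v ω * w ω ≤ r} :=
    isClosed_le (by fun_prop) continuous_const
  exact closure_minimal (convexHull_min h hc) hcl hz

lemma le_of_mem_closure {F : Set (Ω → ℝ)} {M : ℝ}
    (h : ∀ w ∈ F, ∀ ω, w ω ≤ M) {z : Ω → ℝ} (hz : z ∈ closure (convexHull ℝ F)) (ω : Ω) :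
    z ω ≤ M := by
  classical
  have := sum_le_of_mem_closure (F := F) (v := Pi.single ω 1) (r := M)
    (fun w hw => by simpa [Pi.single_apply] using h w hw ω) hz
  simpa [Pi.single_apply] using this

/-- Nash bargaining: a point dominated by the hull is dominated by a positive-facing
boundary point of it. -/
lemma exists_posFacing [Nonempty Ω] {F : Set (Ω → ℝ)} {M : ℝ}
    (hM : ∀ w ∈ F, ∀ ω, w ω ≤ M) (g z : Ω → ℝ) (hz : z ∈ convexHull ℝ F)
    (hgz : ∀ ω, g ω < z ω) : ∃ w ∈ posFacing (convexHull ℝ F), ∀ ω, g ω < w ω := by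
  classical
  set K := closure (convexHull ℝ F) with hK
  have hKc : Convex ℝ K := (convex_convexHull ℝ F).closure
  have hcomp : IsCompact (K ∩ Set.Ici g) := by
    refine (isCompact_Icc (a := g) (b := fun _ => M)).of_isClosed_subset
      (isClosed_closure.inter isClosed_Ici) ?_
    rintro w ⟨h1, h2⟩
    exact ⟨h2, fun ω => le_of_mem_closure hM h1 ω⟩
  obtain ⟨w, ⟨hwK, hwg⟩, hmax⟩ := hcomp.exists_isMaxOn
    (f := fun w : Ω → ℝ => ∏ ω, (w ω - g ω))
    ⟨z, subset_closure hz, fun ω => (hgz ω).le⟩ (by fun_prop)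
  have hpos : 0 < ∏ ω, (w ω - g ω) := by
    have h1 : 0 < ∏ ω, (z ω - g ω) := Finset.prod_pos fun ω _ => sub_pos.2 (hgz ω)
    exact h1.trans_le <| hmax ⟨subset_closure hz, fun ω => (hgz ω).le⟩
  have hgw : ∀ ω, g ω < w ω := by
    intro ω
    refine lt_of_le_of_ne (hwg ω) fun h => ?_
    rw [Finset.prod_eq_zero (Finset.mem_univ ω) (by rw [h, sub_self])] at hpos
    exact lt_irrefl _ hpos
  set v : Ω → ℝ := fun ω => ∏ j ∈ Finset.univ.erase ω, (w j - g j) with hv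
  have hvpos : ∀ ω, 0 < v ω := fun ω => Finset.prod_pos fun j _ => sub_pos.2 (hgw j)
  have hsup : ∀ y ∈ K, ∑ ω, v ω * y ω ≤ ∑ ω, v ω * w ω := by
    intro y hy
    have hd : HasDerivAt (fun t : ℝ => ∏ ω, (w ω + t * (y ω - w ω) - g ω))
        (∑ ω, (∏ j ∈ Finset.univ.erase ω, (w j + 0 * (y j - w j) - g j)) • (y ω - w ω)) 0 := by
      apply HasDerivAt.fun_finsetProd
      intro ω _
      have := (((hasDerivAt_id (0 : ℝ)).mul_const (y ω - w ω)).const_add (w ω)).sub_const (g ω)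
      simpa using this
    have hlim := hd.tendsto_slope_zero_right
    have hle := le_of_tendsto hlim (b := 0) ?_
    · simp only [zero_mul, add_zero, smul_eq_mul] at hle
      change ∑ ω, v ω * (y ω - w ω) ≤ 0 at hle
      simp only [mul_sub, Finset.sum_sub_distrib] at hle
      linarith
    · have h1 : ∀ᶠ t : ℝ in 𝓝[>] 0, ∀ ω, g ω < w ω + t * (y ω - w ω) := by
        rw [eventually_all]
        intro ω
        have hcont : Tendsto (fun t : ℝ => w ω + t * (y ω - w ω)) (𝓝[>] 0)
            (𝓝 (w ω + 0 * (y ω - w ω))) :=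
          (Continuous.tendsto (by fun_prop) 0).mono_left nhdsWithin_le_nhds
        exact hcont.eventually_const_lt (by simpa using hgw ω)
      have h2 : ∀ᶠ t : ℝ in 𝓝[>] 0, t < 1 :=
        nhdsWithin_le_nhds (eventually_lt_nhds one_pos)
      filter_upwards [h1, h2, self_mem_nhdsWithin] with t ht1 ht2 ht0
      have ht0' : (0 : ℝ) < t := ht0
      have hmem : (fun ω => w ω + t * (y ω - w ω)) ∈ K ∩ Set.Ici g := by
        refine ⟨?_, fun ω => (ht1 ω).le⟩
        have := hKc hwK hy (a := 1 - t) (b := t) (by linarith) ht0'.le (by ring)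
        convert this using 1
        ext ω
        simp only [Pi.add_apply, Pi.smul_apply, smul_eq_mul]
        ring
      have hmx : ∏ ω, (w ω + t * (y ω - w ω) - g ω) ≤ ∏ ω, (w ω - g ω) := hmax hmem
      simp only [zero_add, zero_mul, add_zero, smul_eq_mul]
      exact mul_nonpos_of_nonneg_of_nonpos (inv_nonneg.2 ht0'.le) (by linarith)
  refine ⟨w, ⟨⟨hwK, ?_⟩, v, hvpos, fun y hy => hsup y (subset_closure hy)⟩, hgw⟩
  intro hint
  have hcont : Tendsto (fun t : ℝ => fun ω => w ω + t) (𝓝[>] 0) (𝓝 (fun ω => w ω + 0)) :=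
    (Continuous.tendsto (f := fun t : ℝ => fun ω => w ω + t) (by fun_prop) 0).mono_left
      nhdsWithin_le_nhds
  have hev := hcont.eventually (isOpen_interior.mem_nhds (by simpa using hint))
  obtain ⟨t, ht, ht0⟩ := (hev.and self_mem_nhdsWithin).exists
  have ht0' : (0 : ℝ) < t := ht0
  have := hsup _ (subset_closure (interior_subset ht))
  simp only [mul_add, Finset.sum_add_distrib, ← Finset.sum_mul] at this
  have hV : 0 < ∑ ω, v ω := Finset.sum_pos (fun ω _ => hvpos ω) Finset.univ_nonempty
  nlinarith [mul_pos hV ht0']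

/-- Separation: if every probability strictly prefers some element of `F` to `f`, then
some point of the hull dominates `f`. -/
lemma exists_hull_dom {F : Set (Ω → ℝ)} (hF : F.Nonempty) {M : ℝ} (f : Ω → EReal)
    (hf : ∀ ω, f ω ≤ (M : EReal))
    (h : ∀ p, IsProbability p → ∃ w ∈ F, expScore p f < ((∑ ω, p {ω} * w ω : ℝ) : EReal)) :
    ∃ z ∈ convexHull ℝ F, ∀ ω, f ω < (z ω : EReal) := by
  classical
  by_contra! hcon
  set A : Set (Ω → ℝ) := {x | ∀ ω, f ω < (x ω : EReal)} with hA
  have hAo : IsOpen A := by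
    have : A = ⋂ ω, {x : Ω → ℝ | f ω < (x ω : EReal)} := by ext; simp [hA]
    rw [this]
    refine isOpen_iInter_of_finite fun ω => isOpen_lt continuous_const ?_
    exact continuous_coe_real_ereal.comp (continuous_apply ω)
  have hmem : ∀ x : Ω → ℝ, (∀ ω, f ω ≠ ⊥ → (f ω).toReal < x ω) → x ∈ A := by
    intro x hx ω
    by_cases hb : f ω = ⊥
    · rw [hb]; exact EReal.bot_lt_coe _
    · rw [coe_toReal_of_le (hf ω) hb]
      exact EReal.coe_lt_coe_iff.2 (hx ω hb)
  have hmem' : ∀ x ∈ A, ∀ ω, f ω ≠ ⊥ → (f ω).toReal < x ω := by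
    intro x hx ω hb
    have := hx ω
    rw [coe_toReal_of_le (hf ω) hb] at this
    exact EReal.coe_lt_coe_iff.1 this
  have hAc : Convex ℝ A := by
    intro a ha b hb s t hs ht hst
    refine hmem _ fun ω hω => ?_
    have h1 := hmem' a ha ω hω
    have h2 := hmem' b hb ω hω
    simp only [Pi.add_apply, Pi.smul_apply, smul_eq_mul]
    have := (convex_Ioi (f ω).toReal) (x := a ω) h1 (y := b ω) h2 hs ht hst
    simpa using this
  have hdisj : Disjoint A (convexHull ℝ F) := by
    rw [Set.disjoint_left]
    intro x hx hx'
    obtain ⟨ω, hω⟩ := hcon x hx'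
    exact absurd (hx ω) (not_lt.2 hω)
  obtain ⟨φ, u, hφA, hφF⟩ := geometric_hahn_banach_open hAc hAo (convex_convexHull ℝ F) hdisj
  set v : Ω → ℝ := fun ω => - φ (Pi.single ω 1) with hv
  have hφ : ∀ x : Ω → ℝ, φ x = - ∑ ω, v ω * x ω := by
    intro x
    conv_lhs => rw [← Finset.univ_sum_single x]
    rw [map_sum, ← Finset.sum_neg_distrib]
    refine Finset.sum_congr rfl fun ω _ => ?_
    have : (Pi.single ω (x ω) : Ω → ℝ) = x ω • Pi.single ω (1 : ℝ) := by
      rw [← Pi.single_smul]; simp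
    rw [this, map_smul, smul_eq_mul, hv]
    ring
  set a0 : Ω → ℝ := fun ω => (f ω).toReal + 1 with ha0
  have ha0A : a0 ∈ A := hmem _ fun ω _ => by simp [ha0]
  -- moving along coordinates
  have hmove : ∀ ω (t : ℝ), a0 + t • Pi.single ω (1 : ℝ) ∈ A → φ a0 - t * v ω < u := by
    intro ω t ht
    have := hφA _ ht
    rw [map_add, map_smul, smul_eq_mul] at this
    simp only [hv]
    linarith
  have hvnn : ∀ ω, 0 ≤ v ω := by
    intro ω
    by_contra! hneg
    have hlt := hφA _ ha0A
    have := hmove ω ((u - φ a0) / (- v ω)) (hmem _ fun j _ => by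
      have h1 : 0 ≤ (u - φ a0) / (- v ω) := div_nonneg (by linarith) (by linarith)
      have h2 : (0 : ℝ) ≤ (Pi.single ω (1 : ℝ) : Ω → ℝ) j := by
        by_cases hj : j = ω
        · subst hj; simp
        · simp [hj]
      simp only [Pi.add_apply, Pi.smul_apply, smul_eq_mul, ha0]
      have := mul_nonneg h1 h2
      linarith)
    have hne : v ω ≠ 0 := hneg.ne
    have : (u - φ a0) / (- v ω) * v ω = - (u - φ a0) := by field_simp
    linarith
  have hvz : ∀ ω, f ω = ⊥ → v ω = 0 := by
    intro ω hb
    by_contra hne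
    have := hmove ω (- (u - φ a0) / (v ω)) (hmem _ fun j hj => by
      have hjω : j ≠ ω := fun h => hj (h ▸ hb)
      simp [ha0, hjω])
    have : (- (u - φ a0)) / (v ω) * v ω = - (u - φ a0) := by field_simp
    linarith
  obtain ⟨w0, hw0⟩ := hF
  have hVpos : 0 < ∑ ω, v ω := by
    refine lt_of_le_of_ne (Finset.sum_nonneg fun ω _ => hvnn ω) fun h0 => ?_
    have hz : ∀ ω, v ω = 0 := fun ω =>
      (Finset.sum_eq_zero_iff_of_nonneg (fun ω _ => hvnn ω)).1 h0.symm ω (Finset.mem_univ ω)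
    have h1 := hφA _ ha0A
    have h2 := hφF _ (subset_convexHull ℝ F hw0)
    rw [hφ] at h1 h2
    simp [hz] at h1 h2
    linarith
  obtain ⟨p, hp, hpv⟩ := exists_prob (fun ω => v ω / ∑ j, v j)
    (fun ω => div_nonneg (hvnn ω) hVpos.le) (by rw [← Finset.sum_div, div_self hVpos.ne'])
  obtain ⟨w, hw, hlt⟩ := h p hp
  rw [expScore_real p f (fun ω => (f ω).toReal)
    (fun ω h0 => coe_toReal_of_le (hf ω) fun hb => h0 (by rw [hpv, hvz ω hb, zero_div])),
    EReal.coe_lt_coe_iff] at hlt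
  simp only [hpv, div_mul_eq_mul_div, ← Finset.sum_div] at hlt
  rw [div_lt_div_iff_of_pos_right hVpos] at hlt
  have hw' := hφF _ (subset_convexHull ℝ F hw)
  rw [hφ] at hw'
  set V := ∑ ω, v ω with hVdef
  set ε := (∑ ω, v ω * w ω - ∑ ω, v ω * (f ω).toReal) / V with hε
  have hεpos : 0 < ε := div_pos (by linarith) hVpos
  have hmx := hφA (fun ω => (f ω).toReal + ε) (hmem _ fun ω _ => by linarith)
  rw [hφ] at hmx
  simp only [mul_add, Finset.sum_add_distrib, ← Finset.sum_mul] at hmx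
  have : V * ε = ∑ ω, v ω * w ω - ∑ ω, v ω * (f ω).toReal := by
    rw [hε]; field_simp
  rw [← hVdef] at hmx
  linarith

lemma usc_bound {p q : Set Ω → ℝ} (hp : IsProbability p) (hq : IsProbability q) {M t : ℝ}
    {w : Ω → ℝ} (hw : ∀ ω, w ω ≤ M) (h : ∀ ω, (1 - t) * p {ω} ≤ q {ω}) :
    ∑ ω, q {ω} * w ω ≤ (1 - t) * (∑ ω, p {ω} * w ω) + t * M := by
  have h1 : ∑ ω, (q {ω} - (1 - t) * p {ω}) * w ω ≤ ∑ ω, (q {ω} - (1 - t) * p {ω}) * M :=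
    Finset.sum_le_sum fun ω _ => mul_le_mul_of_nonneg_left (hw ω) (by linarith [h ω])
  rw [← Finset.sum_mul, Finset.sum_sub_distrib, ← Finset.mul_sum, prob_sum hp, prob_sum hq] at h1
  have h2 : ∑ ω, (q {ω} - (1 - t) * p {ω}) * w ω
      = ∑ ω, q {ω} * w ω - (1 - t) * (∑ ω, p {ω} * w ω) := by
    rw [Finset.mul_sum, ← Finset.sum_sub_distrib]
    exact Finset.sum_congr rfl fun ω _ => by ring
  rw [h2] at h1
  linarith

end Aux

theorem stmt0 [Fintype Ω] [Nonempty Ω] (M : ℝ)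
    (s : (Set Ω → ℝ) → Ω → EReal)
    (hbound : ∀ p, IsProbability p → ∀ ω, s p ω ≤ (M : EReal))
    (hproper : ∀ p q, IsProbability p → IsProbability q →
      expScore p (s q) ≤ expScore p (s p)) :
    -- (a)
    (∀ s' : (Set Ω → ℝ) → Ω → EReal,
        (∀ c ω, s' c ω ≤ (M : EReal)) →
        (∀ p, IsProbability p → s' p = s p) →
        (∀ p c, IsProbability p → expScore p (s' c) ≤ expScore p (s' p)) →
        (∀ p c, IsProbability p → ¬ IsProbability c →
          expScore p (s' c) < expScore p (s' p)) →
        ∀ c, ¬ IsProbability c →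
          ∃ p, IsProbability p ∧ ∀ ω, s' c ω < s p ω)
    ↔
    -- (b)
    ((∃ p, IsProbability p ∧ expScore p (s p) = ⊥) ∨
      ((∀ (pn : ℕ → Set Ω → ℝ) (p : Set Ω → ℝ),
          (∀ n, IsProbability (pn n)) → IsProbability p →
          (∀ ω : Ω, Tendsto (fun n => pn n {ω}) atTop (𝓝 (p {ω}))) →
          (∀ n, FiniteScore (s (pn n))) → ¬ FiniteScore (s p) →
          Tendsto (fun n => expScore (pn n) (s (pn n))) atTop
            (𝓝 (expScore p (s p)))) ∧
        DenseIn (finScores s) (posFacing (convexHull ℝ (finScores s))))) := by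
  classical
  by_cases hG : ∃ p, IsProbability p ∧ expScore p (s p) = ⊥
  · refine ⟨fun _ => Or.inl hG, fun _ s' _ hext _ hstrict c hc => ?_⟩
    obtain ⟨p, hp, hb⟩ := hG
    have := hstrict p c hp hc
    rw [hext p hp, hb] at this
    exact absurd this not_lt_bot
  have hG' : ∀ p, IsProbability p → expScore p (s p) ≠ ⊥ := fun p hp h => hG ⟨p, hp, h⟩
  set G : (Set Ω → ℝ) → ℝ := fun p => ∑ ω, p {ω} * (s p ω).toReal with hGdef
  have hGe : ∀ p, IsProbability p → expScore p (s p) = (G p : EReal) := fun p hp =>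
    expScore_toReal hp (s p) (hbound p hp) (hG' p hp)
  set F := finScores s with hF
  have hFM : ∀ w ∈ F, ∀ ω, w ω ≤ M := by
    rintro w ⟨p, hp, hw⟩ ω
    have := hbound p hp ω
    rw [hw] at this
    exact EReal.coe_le_coe_iff.1 this
  have hFG : ∀ w ∈ F, ∀ p, IsProbability p → ∑ ω, p {ω} * w ω ≤ G p := by
    rintro w ⟨q, hq, hw⟩ p hp
    have := hproper p q hp hq
    rw [hw, expScore_coe, hGe p hp] at this
    exact EReal.coe_le_coe_iff.1 this
  have hfinF : ∀ p, IsProbability p → (∀ ω, s p ω ≠ ⊥) → (fun ω => (s p ω).toReal) ∈ F :=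
    fun p hp h => ⟨p, hp, funext fun ω => coe_toReal_of_le (hbound p hp ω) (h ω)⟩
  have hposfin : ∀ p, IsProbability p → (∀ ω, p {ω} ≠ 0) → ∀ ω, s p ω ≠ ⊥ := fun p hp h ω hb =>
    hG' p hp (expScore_bot hp _ ω (h ω) hb)
  have hnotfin : ∀ p, IsProbability p → ¬ FiniteScore (s p) → ∃ ω, s p ω = ⊥ := by
    intro p hp h
    by_contra! hcon
    exact h fun ω => ⟨hcon ω, ne_top_of_le_ne_top (EReal.coe_ne_top M) (hbound p hp ω)⟩
  -- the uniform probability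
  have hcard : (0 : ℝ) < Fintype.card Ω := by exact_mod_cast Fintype.card_pos
  constructor
  · intro ha
    right
    have hc0 : ¬ IsProbability (fun _ : Set Ω => (2 : ℝ)) := by
      intro h
      have := h.2.2
      norm_num at this
    -- reformulation of (a)
    have hD : ∀ f : Ω → EReal, (∀ ω, f ω ≤ (M : EReal)) →
        (∀ p, IsProbability p → expScore p f ≤ expScore p (s p)) → ∀ δ : ℝ, 0 < δ →
        ∃ p, IsProbability p ∧ ∀ ω, f ω - (δ : EReal) < s p ω := by
      intro f hf hfp δ hδ
      have hlt : ∀ p, IsProbability p →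
          expScore p (fun ω => f ω - (δ : EReal)) < expScore p (s p) := fun p hp =>
        expScore_sub_lt hp f hf (hG' p hp) (hfp p hp) hδ
      have hle : ∀ ω, f ω - (δ : EReal) ≤ (M : EReal) := by
        intro ω
        refine le_trans ?_ (hf ω)
        have : (0 : EReal) ≤ (δ : EReal) := by exact_mod_cast hδ.le
        exact EReal.sub_le_of_le_add (le_add_of_nonneg_right this)
      have := ha (fun c => if IsProbability c then s c else fun ω => f ω - (δ : EReal))
        ?_ ?_ ?_ ?_ (fun _ => 2) hc0
      · simpa only [if_neg hc0] using this
      · intro c ω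
        by_cases hc : IsProbability c
        · simpa only [if_pos hc] using hbound c hc ω
        · simpa only [if_neg hc] using hle ω
      · intro p hp
        simp only [if_pos hp]
      · intro p c hp
        by_cases hc : IsProbability c
        · simpa only [if_pos hc, if_pos hp] using hproper p c hp hc
        · simpa only [if_neg hc, if_pos hp] using (hlt p hp).le
      · intro p c hp hc
        simpa only [if_neg hc, if_pos hp] using hlt p hp
    constructor
    · intro pn p hpn hp hlim hfin hnf
      have happrox : ∀ x, x < G p → ∃ w ∈ F, x < ∑ ω, p {ω} * w ω := by
        intro x hx
        obtain ⟨q, hq, hdom⟩ := hD (s p) (hbound p hp) (fun q hq => hproper q p hq hp)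
          ((G p - x) / 2) (by linarith)
        have hqf : ∀ ω, s q ω ≠ ⊥ := fun ω => ne_bot_of_gt (hdom ω)
        refine ⟨_, hfinF q hq hqf, ?_⟩
        have hle : ∑ ω, p {ω} * ((s p ω).toReal - (G p - x) / 2)
            ≤ ∑ ω, p {ω} * (s q ω).toReal := by
          refine Finset.sum_le_sum fun ω _ => ?_
          by_cases h0 : p {ω} = 0
          · simp [h0]
          refine mul_le_mul_of_nonneg_left ?_ (hp.1 _)
          have hb : s p ω ≠ ⊥ := fun hb => hG' p hp (expScore_bot hp _ ω h0 hb)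
          have := hdom ω
          rw [coe_toReal_of_le (hbound p hp ω) hb, coe_toReal_of_le (hbound q hq ω) (hqf ω),
            ← EReal.coe_sub, EReal.coe_lt_coe_iff] at this
          exact this.le
        simp only [mul_sub, Finset.sum_sub_distrib, ← Finset.sum_mul, prob_sum hp] at hle
        change G p - 1 * ((G p - x) / 2) ≤ _ at hle
        linarith
      simp only [fun n => hGe (pn n) (hpn n), hGe p hp]
      rw [EReal.tendsto_coe, tendsto_order]
      constructor
      · intro x hx
        obtain ⟨w, hw, hxw⟩ := happrox x hx
        have ht : Tendsto (fun n => ∑ ω, pn n {ω} * w ω) atTop (𝓝 (∑ ω, p {ω} * w ω)) :=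
          tendsto_finsetSum _ fun ω _ => (hlim ω).mul_const _
        filter_upwards [ht.eventually_const_lt hxw] with n hn
        exact hn.trans_le (hFG w hw _ (hpn n))
      · intro x hx
        have hcont : Tendsto (fun t : ℝ => (1 - t) * G p + t * M) (𝓝[>] 0)
            (𝓝 ((1 - 0) * G p + 0 * M)) :=
          (Continuous.tendsto (f := fun t : ℝ => (1 - t) * G p + t * M) (by fun_prop) 0).mono_left
            nhdsWithin_le_nhds
        have h2 : ∀ᶠ t : ℝ in 𝓝[>] 0, t < 1 :=
          nhdsWithin_le_nhds (eventually_lt_nhds one_pos)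
        obtain ⟨t, ⟨ht1, ht2⟩, ht0⟩ :=
          (((hcont.eventually_lt_const (by simpa using hx)).and h2).and self_mem_nhdsWithin).exists
        have ht0' : (0 : ℝ) < t := ht0
        have hev : ∀ᶠ n in atTop, ∀ ω, (1 - t) * p {ω} ≤ pn n {ω} := by
          rw [eventually_all]
          intro ω
          by_cases h0 : p {ω} = 0
          · exact Eventually.of_forall fun n => by rw [h0, mul_zero]; exact (hpn n).1 _
          · have hpos : 0 < p {ω} := lt_of_le_of_ne (hp.1 _) (Ne.symm h0)
            have := (hlim ω).eventually_const_lt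
              (show (1 - t) * p {ω} < p {ω} by nlinarith [mul_pos ht0' hpos])
            exact this.mono fun n hn => hn.le
        filter_upwards [hev] with n hn
        have hw := hfinF (pn n) (hpn n) (fun ω => (hfin n ω).1)
        have h3 := usc_bound hp (hpn n) (hFM _ hw) hn
        have h4 := hFG _ hw p hp
        have h5 : (1 - t) * (∑ ω, p {ω} * (s (pn n) ω).toReal) ≤ (1 - t) * G p :=
          mul_le_mul_of_nonneg_left h4 (by linarith)
        change G (pn n) ≤ _ at h3
        linarith
    · rintro U hU ⟨z, hzU, hzfr, v, hvpos, hvle⟩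
      have hzcl : z ∈ closure (convexHull ℝ F) := frontier_subset_closure hzfr
      obtain ⟨η, hη, hball⟩ := Metric.isOpen_iff.1 hU z hzU
      set V := ∑ ω, v ω with hV
      have hVpos : 0 < V := Finset.sum_pos (fun ω _ => hvpos ω) Finset.univ_nonempty
      have h1 : ∀ᶠ ε : ℝ in 𝓝[>] 0, ∀ ω, ε * V < v ω * η := by
        rw [eventually_all]
        intro ω
        have hcont : Tendsto (fun t : ℝ => t * V) (𝓝[>] 0) (𝓝 (0 * V)) :=
          (Continuous.tendsto (by fun_prop) 0).mono_left nhdsWithin_le_nhds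
        exact hcont.eventually_lt_const (by simpa using mul_pos (hvpos ω) hη)
      have h2 : ∀ᶠ t : ℝ in 𝓝[>] 0, t < η :=
        nhdsWithin_le_nhds (eventually_lt_nhds hη)
      obtain ⟨ε, ⟨hε1, hε2⟩, hε0⟩ := ((h1.and h2).and self_mem_nhdsWithin).exists
      have hε0' : (0 : ℝ) < ε := hε0
      obtain ⟨q, hq, hdom⟩ := hD (fun ω => (z ω : EReal))
        (fun ω => EReal.coe_le_coe_iff.2 (le_of_mem_closure hFM hzcl ω))
        (fun p hp => by
          rw [expScore_coe, hGe p hp, EReal.coe_le_coe_iff]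
          exact sum_le_of_mem_closure (fun w hw => hFG w hw p hp) hzcl) ε hε0'
      have hqf : ∀ ω, s q ω ≠ ⊥ := fun ω => ne_bot_of_gt (hdom ω)
      have hwF := hfinF q hq hqf
      refine ⟨_, hball ?_, hwF⟩
      have hvw := hvle _ (subset_convexHull ℝ F hwF)
      have hlow : ∀ ω, z ω - ε < (s q ω).toReal := by
        intro ω
        have := hdom ω
        rwa [coe_toReal_of_le (hbound q hq ω) (hqf ω), ← EReal.coe_sub,
          EReal.coe_lt_coe_iff] at this
      rw [Metric.mem_ball, dist_pi_lt_iff hη]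
      intro ω
      have hsingle : v ω * ((s q ω).toReal - z ω + ε) ≤ ∑ j, v j * ((s q j).toReal - z j + ε) :=
        Finset.single_le_sum (f := fun j => v j * ((s q j).toReal - z j + ε))
          (fun j _ => mul_nonneg (hvpos j).le (by linarith [hlow j])) (Finset.mem_univ ω)
      simp only [mul_add, mul_sub, Finset.sum_add_distrib, Finset.sum_sub_distrib,
        ← Finset.sum_mul] at hsingle
      rw [← hV] at hsingle
      have hε1' := hε1 ω
      have hup : v ω * ((s q ω).toReal - z ω) < v ω * η := by
        have := mul_pos (hvpos ω) hε0'
        nlinarith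
      have := lt_of_mul_lt_mul_left hup (hvpos ω).le
      rw [Real.dist_eq, abs_lt]
      exact ⟨by linarith [hlow ω], this⟩
  · rintro (h | ⟨hi, hii⟩)
    · exact absurd h hG
    intro s' hs'M hext hprop hstrict c hc
    have hmain : ∀ p, IsProbability p →
        ∃ w ∈ F, expScore p (s' c) < ((∑ ω, p {ω} * w ω : ℝ) : EReal) := by
      intro p hp
      have hlt := hstrict p c hp hc
      rw [hext p hp, hGe p hp] at hlt
      by_cases hfs : FiniteScore (s p)
      · exact ⟨_, hfinF p hp (fun ω => (hfs ω).1), hlt⟩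
      obtain ⟨x, hx1, hx2⟩ := EReal.lt_iff_exists_real_btwn.1 hlt
      have hx2' : x < G p := EReal.coe_lt_coe_iff.1 hx2
      by_contra! hcon
      have hcon' : ∀ w ∈ F, ∑ ω, p {ω} * w ω ≤ x := fun w hw =>
        EReal.coe_le_coe_iff.1 ((hcon w hw).trans hx1.le)
      set t : ℕ → ℝ := fun n => 1 / ((n : ℝ) + 1) with ht
      have ht0 : ∀ n, 0 < t n := fun n => Nat.one_div_pos_of_nat
      have ht1 : ∀ n, t n ≤ 1 := fun n => by
        rw [ht]
        exact (div_le_one (by positivity)).2 (by linarith [Nat.cast_nonneg (α := ℝ) n])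
      have htlim : Tendsto t atTop (𝓝 0) := tendsto_one_div_add_atTop_nhds_zero_nat
      have hex : ∀ n, ∃ q : Set Ω → ℝ, IsProbability q ∧
          ∀ ω, q {ω} = (1 - t n) * p {ω} + t n * (1 / (Fintype.card Ω : ℝ)) := by
        intro n
        refine exists_prob (fun ω => (1 - t n) * p {ω} + t n * (1 / (Fintype.card Ω : ℝ)))
          (fun ω => ?_) ?_
        · have := mul_nonneg (sub_nonneg.2 (ht1 n)) (hp.1 {ω})
          have := mul_pos (ht0 n) (one_div_pos.2 hcard)
          linarith
        · rw [Finset.sum_add_distrib, ← Finset.mul_sum, prob_sum hp, Finset.sum_const,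
            Finset.card_univ, nsmul_eq_mul]
          field_simp
          ring
      choose pn hpn hpnv using hex
      have hge : ∀ n ω, (1 - t n) * p {ω} < pn n {ω} := by
        intro n ω
        have := mul_pos (ht0 n) (one_div_pos.2 hcard)
        rw [hpnv]
        linarith
      have hpnf : ∀ n ω, s (pn n) ω ≠ ⊥ := fun n => hposfin _ (hpn n) fun ω =>
        ((mul_nonneg (sub_nonneg.2 (ht1 n)) (hp.1 {ω})).trans_lt (hge n ω)).ne'
      have hconv : ∀ ω, Tendsto (fun n => pn n {ω}) atTop (𝓝 (p {ω})) := by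
        intro ω
        simp only [hpnv]
        have := ((htlim.const_sub 1).mul_const (p {ω})).add
          (htlim.mul_const (1 / (Fintype.card Ω : ℝ)))
        simpa using this
      have hlim := hi pn p hpn hp hconv (fun n => by
        by_contra hnf
        obtain ⟨ω, hω⟩ := hnotfin _ (hpn n) hnf
        exact hpnf n ω hω) hfs
      simp only [fun n => hGe (pn n) (hpn n), hGe p hp] at hlim
      rw [EReal.tendsto_coe] at hlim
      have hlim2 : Tendsto (fun n => (1 - t n) * x + t n * M) atTop (𝓝 x) := by
        have := ((htlim.const_sub 1).mul_const x).add (htlim.mul_const M)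
        simpa using this
      have := le_of_tendsto_of_tendsto' hlim hlim2 fun n => by
        have hw := hfinF (pn n) (hpn n) (hpnf n)
        have h3 := usc_bound hp (hpn n) (hFM _ hw) (fun ω => (hge n ω).le)
        have h5 := mul_le_mul_of_nonneg_left (hcon' _ hw) (sub_nonneg.2 (ht1 n))
        change G (pn n) ≤ _ at h3
        linarith
      linarith
    have hFne : F.Nonempty := by
      obtain ⟨p, hp, -⟩ := exists_prob (fun _ : Ω => 1 / (Fintype.card Ω : ℝ))
        (fun ω => (one_div_pos.2 hcard).le) (by
          rw [Finset.sum_const, Finset.card_univ, nsmul_eq_mul]; field_simp)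
      obtain ⟨w, hw, -⟩ := hmain p hp
      exact ⟨w, hw⟩
    obtain ⟨z, hz, hzdom⟩ := exists_hull_dom hFne (s' c) (hs'M c) hmain
    set g : Ω → ℝ := fun ω => if s' c ω = ⊥ then z ω - 1 else (s' c ω).toReal with hg
    have hfg : ∀ ω, s' c ω ≤ (g ω : EReal) := by
      intro ω
      by_cases hb : s' c ω = ⊥
      · rw [hb]; exact bot_le
      · simp only [hg, if_neg hb]
        exact (coe_toReal_of_le (hs'M c ω) hb).le
    have hgz : ∀ ω, g ω < z ω := by
      intro ω
      by_cases hb : s' c ω = ⊥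
      · simp only [hg, if_pos hb]; linarith
      · simp only [hg, if_neg hb]
        have := hzdom ω
        rwa [coe_toReal_of_le (hs'M c ω) hb, EReal.coe_lt_coe_iff] at this
    obtain ⟨w, hw, hgw⟩ := exists_posFacing hFM g z hz hgz
    have hopen : IsOpen {x : Ω → ℝ | ∀ ω, g ω < x ω} := by
      have : {x : Ω → ℝ | ∀ ω, g ω < x ω} = ⋂ ω, {x : Ω → ℝ | g ω < x ω} := by ext; simp
      rw [this]
      exact isOpen_iInter_of_finite fun ω => isOpen_lt continuous_const (continuous_apply ω)
    obtain ⟨y, hy, q, hq, hqy⟩ := hii _ hopen ⟨w, hgw, hw⟩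
    refine ⟨q, hq, fun ω => ?_⟩
    rw [hqy]
    exact (hfg ω).trans_lt (EReal.coe_lt_coe_iff.2 (hy ω))
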